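/- arXiv:1007.2336 — 3 statements merged into one kernel-verified Lean document; each statement's English description precedes it below -/
import Mathlib

section
/- Let φ : ℝ → ℝ be twice continuously differentiable, s ≥ 2 an integer, and let representative atoms be given by integers ℓ_{−M} = −N < ℓ_{−M+1} < ⋯ < ℓ_M = N with ν_j := ℓ_j − ℓ_{j−1} ≥ s, and reals Y_{−M} < ⋯ < Y_M. Define r_j := (Y_j − Y_{j−1})/ν_j, set r_{M+1} := r_{−M+1}, and let y : ℤ → ℝ be the piecewise linear interpolant y_{ℓ_{j−1}+i} := Y_{j−1} + i·r_j for 0 ≤ i ≤ ν_j, extended by y_{ℓ+2N} = y_ℓ + (Y_M − Y_{−M}). Then there exist numbers η_{jk} ∈ [0, 1] (for j = −M+1, …, M and k = 2, …, s) such that E^a(y) = Σ_{j=−M+1}^{M} ν_j φ_cb(r_j) + Σ_{j=−M+1}^{M} Σ_{k=2}^{s} ((−k³ + k)/12) · φ''( k(η_{jk}·r_j + (1−η_{jk})·r_{j+1}) ) · (r_{j+1} − r_j)², where E^a(y) := Σ_{k=1}^{s} Σ_{ℓ=−N+1}^{N} φ(y_{ℓ+k−1} − y_{ℓ−1}) and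 φ_cb(r) := Σ_{k=1}^{s} φ(k r). In particular the coarse-grained local QC energy E^qc(Y) := Σ_{j=−M+1}^{M} ν_j φ_cb(r_j) is formally a second-order approximation to the fully atomistic energy E^a(y). -/
/-!
Fix the interaction range `k`. A bond of length `k` starting in the element `j` either lies inside
the element and has length `k r_j`, or overshoots its right end by `p < k ≤ s ≤ ν_{j+1}` sites and
has length `(k - p) r_j + p r_{j+1}` (`block_sum`). Summing over the elements and using
periodicity to replace `(k - 1)/2` copies of `φ(k r_j)` by `φ(k r_{j+1})`, the defect of the
local energy becomes a sum over `j` of the linear interpolation errors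
`φ((k - p) r_j + p r_{j+1}) - ((k - p)/k) φ(k r_j) - (p/k) φ(k r_{j+1})`.

Each error lies between `-(1/2) p (k - p) (r_{j+1} - r_j)²` times the extreme values of `φ''` on the
segment (`convex_gap`), and `∑ p (k - p) = (k³ - k)/6`. The intermediate value theorem applied to
`φ''` then turns the sum over `p` into one value of `φ''` (`interp_remainder`).
-/

open Finset Real

noncomputable section

/-- scaled lattice spacing ε = 1/N -/
def eps (N : ℕ) : ℝ := 1 / N

/-- the index range ℓ = -N+1, …, N -/
def rng (N : ℕ) : Finset ℤ := Finset.Icc (-(N : ℤ) + 1) N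

/-- 2N-periodicity of a sequence -/
def Periodic2N (N : ℕ) (u : ℤ → ℝ) : Prop := ∀ ℓ : ℤ, u (ℓ + 2 * (N : ℤ)) = u ℓ

/-- the space 𝒰 of 2N-periodic zero-mean displacements -/
def memU (N : ℕ) (u : ℤ → ℝ) : Prop :=
  Periodic2N N u ∧ ∑ ℓ ∈ rng N, u ℓ = 0

/-- discrete differentiation operator: (Dv)_ℓ = (v_ℓ - v_{ℓ-1})/ε -/
def Dv (N : ℕ) (v : ℤ → ℝ) : ℤ → ℝ := fun ℓ => (v ℓ - v (ℓ - 1)) / eps N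

/-- squared discrete ℓ²_ε norm -/
def nsq (N : ℕ) (v : ℤ → ℝ) : ℝ := eps N * ∑ ℓ ∈ rng N, v ℓ ^ 2

/-- discrete ℓ²_ε norm -/
def nrm (N : ℕ) (v : ℤ → ℝ) : ℝ := Real.sqrt (nsq N v)

/-- squared discrete ℓ²_ε seminorm over an index set S -/
def nsqS (N : ℕ) (S : Finset ℤ) (v : ℤ → ℝ) : ℝ := eps N * ∑ ℓ ∈ S, v ℓ ^ 2

/-- discrete ℓ²_ε seminorm over an index set S -/
def nrmS (N : ℕ) (S : Finset ℤ) (v : ℤ → ℝ) : ℝ := Real.sqrt (nsqS N S v)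

/-- discrete ℓ^∞ norm over an index set S -/
def linf (S : Finset ℤ) (v : ℤ → ℝ) : ℝ := sSup ((fun ℓ => |v ℓ|) '' (S : Set ℤ))

/-- the interfacial index set 𝒜_qnl(k) -/
def Aqnl (K : ℤ) (k : ℕ) : Finset ℤ := Finset.Icc (-K - (k : ℤ) + 1) (K + 1)

/-- the continuum index set 𝒞_qnl(k) -/
def Cqnl (N : ℕ) (K : ℤ) (k : ℕ) : Finset ℤ :=
  Finset.Icc (-(N : ℤ) + 1) (-K - (k : ℤ)) ∪ Finset.Icc (K + 2) (N : ℤ)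

/-- the interface ℐ_qnl(k) between continuum and atomistic regions -/
def Iqnl (K : ℤ) (k : ℕ) : Finset ℤ :=
  Finset.Icc (-K - (k : ℤ) + 1) (-K - 1) ∪ Finset.Icc (K + 2) (K + (k : ℤ))

/-- the extended continuum region 𝒞̃_qnl(k) = 𝒞_qnl(k) ∪ ℐ_qnl(k) -/
def Ctil (N : ℕ) (K : ℤ) (k : ℕ) : Finset ℤ := Cqnl N K k ∪ Iqnl K k

/-- Quantitative Jensen inequality: a lower bound `m` on the second derivative improves the chord
inequality by `(m / 2) u v (b - a)²`, because `φ - m x² / 2` is convex. -/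
lemma convex_gap (φ : ℝ → ℝ) (hφ : ContDiff ℝ 2 φ) (a b m : ℝ)
    (hm : ∀ x ∈ segment ℝ a b, m ≤ iteratedDeriv 2 φ x) (u v : ℝ) (hu : 0 ≤ u) (hv : 0 ≤ v)
    (huv : u + v = 1) :
    φ (u * a + v * b) ≤ u * φ a + v * φ b - m / 2 * (u * v) * (b - a) ^ 2 := by
  have hd : Differentiable ℝ φ := hφ.differentiable (by norm_num)
  have hd2 : Differentiable ℝ (deriv φ) :=
    (hφ.iterate_deriv' 1 1).differentiable (by norm_num)
  have h1 : ∀ x, HasDerivAt (fun x => φ x - m / 2 * x ^ 2) (deriv φ x - m * x) x := by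
    intro x
    refine ((hd x).hasDerivAt.sub (((hasDerivAt_id x).pow 2).const_mul (m / 2))).congr_deriv ?_
    simp
    ring
  have h1' : deriv (fun x => φ x - m / 2 * x ^ 2) = fun x => deriv φ x - m * x :=
    funext fun x => (h1 x).deriv
  have h2 : ∀ x, HasDerivAt (fun x => deriv φ x - m * x) (iteratedDeriv 2 φ x - m) x := by
    intro x
    refine ((hd2 x).hasDerivAt.sub ((hasDerivAt_id x).const_mul m)).congr_deriv ?_
    simp [iteratedDeriv_succ, iteratedDeriv_zero]
  have hc : ConvexOn ℝ (segment ℝ a b) (fun x => φ x - m / 2 * x ^ 2) := by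
    refine convexOn_of_deriv2_nonneg (convex_segment a b)
      (fun x _ => (h1 x).continuousAt.continuousWithinAt)
      (fun x _ => (h1 x).differentiableAt.differentiableWithinAt) ?_ ?_
    · rw [h1']
      exact fun x _ => (h2 x).differentiableAt.differentiableWithinAt
    · intro x hx
      have : deriv^[2] (fun x => φ x - m / 2 * x ^ 2) x = iteratedDeriv 2 φ x - m := by
        rw [Function.iterate_succ, Function.iterate_one, Function.comp_apply, h1', (h2 x).deriv]
      rw [this]
      linarith [hm x (interior_subset hx)]
  have := hc.2 (left_mem_segment ℝ a b) (right_mem_segment ℝ a b) hu hv huv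
  simp only [smul_eq_mul] at this
  obtain rfl : v = 1 - u := by linarith
  nlinarith [this]

lemma sum_weights (k : ℕ) (K : ℝ) :
    ∑ p ∈ range k, (K - (p : ℝ)) * p
      = K * (k * (k - 1) / 2) - (k - 1) * k * (2 * k - 1) / 6 := by
  induction k with
  | zero => simp
  | succ n ih =>
    rw [sum_range_succ, ih]
    push_cast
    ring

/-- The interpolation errors at the nodes dividing `[k a, k b]` into `k` equal parts sum to a
single second-derivative term. -/
lemma interp_remainder (φ : ℝ → ℝ) (hφ : ContDiff ℝ 2 φ) (a b : ℝ) (k : ℕ) :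
    ∃ η : ℝ, η ∈ Set.Icc (0 : ℝ) 1 ∧
      ∑ p ∈ range k, (φ (((k : ℝ) - p) * a + p * b) - (((k : ℝ) - p) / k * φ (k * a)
          + (p : ℝ) / k * φ (k * b)))
        = ((-(k : ℝ) ^ 3 + (k : ℝ)) / 12)
            * iteratedDeriv 2 φ ((k : ℝ) * (η * a + (1 - η) * b)) * (b - a) ^ 2 := by
  rcases Nat.eq_zero_or_pos k with rfl | hk
  · exact ⟨0, by simp, by simp⟩
  have hk0 : (0 : ℝ) < k := by exact_mod_cast hk
  have hk1 : (1 : ℝ) ≤ k := by exact_mod_cast hk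
  have hcont : Continuous (iteratedDeriv 2 φ) := hφ.continuous_iteratedDeriv 2 (by norm_num)
  set S := segment ℝ ((k : ℝ) * a) (k * b) with hS
  have hcomp : IsCompact S := by
    rw [hS, segment_eq_uIcc]; exact isCompact_uIcc
  have hne : S.Nonempty := ⟨_, left_mem_segment ℝ _ _⟩
  have hconn : IsPreconnected S := (convex_segment _ _).isPreconnected
  obtain ⟨x₀, hx₀, hmin⟩ := hcomp.exists_isMinOn hne hcont.continuousOn
  obtain ⟨x₁, hx₁, hmax⟩ := hcomp.exists_isMaxOn hne hcont.continuousOn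
  set F := ∑ p ∈ range k, (φ (((k : ℝ) - p) * a + p * b) - (((k : ℝ) - p) / k * φ (k * a)
          + (p : ℝ) / k * φ (k * b))) with hF
  set C : ℝ := ((k : ℝ) ^ 3 - k) / 12 * (b - a) ^ 2 with hC
  have hC0 : 0 ≤ C := by
    have : (k : ℝ) ≤ (k : ℝ) ^ 3 := le_self_pow₀ hk1 (by norm_num)
    exact mul_nonneg (by linarith) (sq_nonneg _)
  have hCsum : ∀ m : ℝ, ∑ p ∈ range k, (- m / 2 * (b - a) ^ 2 * (((k : ℝ) - p) * p)) = - m * C := by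
    intro m
    rw [← mul_sum, sum_weights, hC]
    ring
  have harg : ∀ p : ℝ, ((k : ℝ) - p) / k * (k * a) + p / k * (k * b)
      = ((k : ℝ) - p) * a + p * b := by
    intro p; field_simp
  have hsq : ∀ m p : ℝ, m / 2 * (((k : ℝ) - p) / k * (p / k)) * (k * b - k * a) ^ 2
      = m / 2 * (b - a) ^ 2 * (((k : ℝ) - p) * p) := by
    intro m p; field_simp
  have hw : ∀ p ∈ range k, 0 ≤ ((k : ℝ) - p) / k ∧ 0 ≤ (p : ℝ) / k
      ∧ ((k : ℝ) - p) / k + (p : ℝ) / k = 1 := by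
    intro p hp
    have : (p : ℝ) ≤ k := by exact_mod_cast (mem_range.1 hp).le
    exact ⟨div_nonneg (by linarith) hk0.le, by positivity, by field_simp; ring⟩
  have hup : F ≤ - iteratedDeriv 2 φ x₀ * C := by
    rw [← hCsum]
    refine sum_le_sum fun p hp => ?_
    obtain ⟨h1, h2, h3⟩ := hw p hp
    have := convex_gap φ hφ (k * a) (k * b) _ (fun x hx => hmin hx) _ _ h1 h2 h3
    rw [harg, hsq] at this
    linarith
  have hlo : - iteratedDeriv 2 φ x₁ * C ≤ F := by
    rw [← hCsum]
    refine sum_le_sum fun p hp => ?_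
    obtain ⟨h1, h2, h3⟩ := hw p hp
    have := convex_gap (-φ) hφ.neg (k * a) (k * b) (- iteratedDeriv 2 φ x₁) (fun x hx => by
      rw [iteratedDeriv_neg]; exact neg_le_neg (hmax hx)) _ _ h1 h2 h3
    rw [harg, hsq] at this
    simp only [Pi.neg_apply] at this
    linarith
  obtain ⟨ξ, hξ, hξF⟩ : ∃ ξ ∈ S, F = - C * iteratedDeriv 2 φ ξ := by
    have := hconn.intermediate_value hx₁ hx₀
      (f := fun x => - C * iteratedDeriv 2 φ x) (by fun_prop)
    obtain ⟨ξ, h, h'⟩ := this (show F ∈ Set.Icc _ _ from ⟨by linarith, by linarith⟩)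
    exact ⟨ξ, h, h'.symm⟩
  obtain ⟨u, v, hu, hv, huv, rfl⟩ := hξ
  refine ⟨u, ⟨hu, by linarith⟩, ?_⟩
  obtain rfl : v = 1 - u := by linarith
  rw [hξF, hC]
  have : u • ((k : ℝ) * a) + (1 - u) • ((k : ℝ) * b) = k * (u * a + (1 - u) * b) := by
    simp only [smul_eq_mul]; ring
  rw [this]
  ring

lemma sum_Ioc_split (f : ℤ → ℝ) {a b c : ℤ} (hab : a ≤ b) (hbc : b ≤ c) :
    ∑ i ∈ Ioc a c, f i = ∑ i ∈ Ioc a b, f i + ∑ i ∈ Ioc b c, f i := by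
  rw [← Ioc_union_Ioc_eq_Ioc hab hbc, sum_union]
  exact Ioc_disjoint_Ioc_of_le le_rfl

lemma sum_Ioc_succ (f : ℤ → ℝ) {a b : ℤ} (hab : a ≤ b) :
    ∑ i ∈ Ioc a (b + 1), f i = ∑ i ∈ Ioc a b, f i + f (b + 1) := by
  rw [sum_Ioc_split f hab (by lia : b ≤ b + 1)]
  congr 1
  have : Ioc b (b + 1) = {b + 1} := by ext; simp; lia
  rw [this, sum_singleton]

lemma sum_Ioc_eq_range (f : ℤ → ℝ) (a : ℤ) (n : ℕ) :
    ∑ i ∈ Ioc a (a + n), f i = ∑ p ∈ range n, f (a + p + 1) := by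
  induction n with
  | zero => simp
  | succ n ih =>
    rw [sum_range_succ, ← ih, Nat.cast_succ, ← add_assoc, sum_Ioc_succ f (by lia)]

/-- A sum over all sites is the sum over the elements of the sums over the sites of an element. -/
lemma sum_elements (f : ℤ → ℝ) (L : ℤ → ℤ) (a : ℤ) (n : ℕ)
    (hL : ∀ j ∈ Ioc a (a + n), L (j - 1) ≤ L j) :
    L a ≤ L (a + n) ∧ ∑ i ∈ Ioc (L a) (L (a + n)), f i
      = ∑ j ∈ Ioc a (a + n), ∑ i ∈ Ioc (L (j - 1)) (L j), f i := by
  induction n with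
  | zero => simp
  | succ n ih =>
    obtain ⟨h1, h2⟩ := ih fun j hj => hL j (by simp at hj ⊢; lia)
    have h3 : L (a + n) ≤ L (a + n + 1) := by
      have := hL (a + n + 1) (by simp)
      simpa using this
    rw [Nat.cast_succ, ← add_assoc]
    refine ⟨h1.trans h3, ?_⟩
    rw [sum_Ioc_succ _ (by lia), ← h2, sum_Ioc_split f h1 h3]
    simp

lemma sum_Ioc_shift (g : ℤ → ℝ) (a : ℤ) (n : ℕ) :
    ∑ j ∈ Ioc a (a + n), g (j + 1) = ∑ j ∈ Ioc a (a + n), g j + g (a + n + 1) - g (a + 1) := by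
  induction n with
  | zero => simp
  | succ n ih =>
    rw [Nat.cast_succ, ← add_assoc, sum_Ioc_succ _ (by lia), sum_Ioc_succ _ (by lia), ih]
    ring

/-- The bonds of length `k` starting in the element `[A, B]`, whose spacing is `ρ`, when the spacing
just beyond `B` is `ρ'`. The last `k` of them overshoot `B` by `p = 0, …, k - 1` sites. -/
lemma block_sum (φ : ℝ → ℝ) (y : ℤ → ℝ) (A B : ℤ) (k : ℕ) (hk : (k : ℤ) ≤ B - A)
    (ρ ρ' yA yB : ℝ)
    (h1 : ∀ i : ℤ, 0 ≤ i → i ≤ B - A → y (A + i) = yA + i * ρ)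
    (h2 : ∀ i : ℤ, 0 ≤ i → i ≤ k → y (B + i) = yB + i * ρ') :
    ∑ ℓ ∈ Ioc A B, φ (y (ℓ + k - 1) - y (ℓ - 1))
      = (((B - A : ℤ) : ℝ) - k) * φ (k * ρ)
        + ∑ p ∈ range k, φ (((k : ℝ) - p) * ρ + p * ρ') := by
  have hB : yB = yA + ((B - A : ℤ) : ℝ) * ρ := by
    have e1 := h1 (B - A) (by lia) le_rfl
    have e2 := h2 0 le_rfl (by lia)
    rw [show A + (B - A) = B + 0 by ring, e2] at e1
    simpa using e1
  rw [sum_Ioc_split _ (by lia : A ≤ B - k) (by lia : B - (k : ℤ) ≤ B)]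
  congr 1
  · rw [sum_congr rfl (g := fun _ => φ (k * ρ)), sum_const, nsmul_eq_mul, Int.card_Ioc]
    · congr 1
      have : (((B - k - A).toNat : ℤ) : ℝ) = ((B - A - k : ℤ) : ℝ) := by
        rw [Int.toNat_of_nonneg (by lia)]; congr 1; ring
      rw [Int.cast_natCast] at this
      rw [this]; push_cast; ring
    · intro ℓ hℓ
      rw [mem_Ioc] at hℓ
      have e1 := h1 (ℓ + k - 1 - A) (by lia) (by lia)
      have e2 := h1 (ℓ - 1 - A) (by lia) (by lia)
      rw [add_sub_cancel] at e1 e2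
      rw [e1, e2]; congr 1; push_cast; ring
  · have := sum_Ioc_eq_range (fun ℓ => φ (y (ℓ + k - 1) - y (ℓ - 1))) (B - k) k
    rw [sub_add_cancel] at this
    rw [this]
    refine sum_congr rfl fun p hp => ?_
    rw [mem_range] at hp
    have e1 := h2 p (by lia) (by lia)
    have e2 := h1 (B - A - k + p) (by lia) (by lia)
    rw [show B - (k : ℤ) + p + 1 + k - 1 = B + p by ring,
      show B - (k : ℤ) + p + 1 - 1 = A + (B - A - k + p) by ring, e1, e2, hB]
    congr 1; push_cast; ring

/-- the coarse-grained local QC energy is formally a second order approximation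
of the atomistic energy: the interfacial remainders have the Taylor form with η_{jk} ∈ [0,1]. -/
theorem localQC_second_order (N M : ℕ) (hN : 0 < N) (hM : 0 < M)
    (s : ℕ) (hs : 2 ≤ s) (φ : ℝ → ℝ) (hφ : ContDiff ℝ 2 φ)
    (ℓidx : ℤ → ℤ) (Y : ℤ → ℝ) (r : ℤ → ℝ) (y : ℤ → ℝ)
    (hl0 : ℓidx (-(M : ℤ)) = -(N : ℤ)) (hlM : ℓidx (M : ℤ) = (N : ℤ))
    (hmono : ∀ j ∈ Finset.Icc (-(M : ℤ) + 1) (M : ℤ), ℓidx (j - 1) < ℓidx j)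
    (hν : ∀ j ∈ Finset.Icc (-(M : ℤ) + 1) (M : ℤ), (s : ℤ) ≤ ℓidx j - ℓidx (j - 1))
    (hY : ∀ j ∈ Finset.Icc (-(M : ℤ) + 1) (M : ℤ), Y (j - 1) < Y j)
    (hr : ∀ j ∈ Finset.Icc (-(M : ℤ) + 1) (M : ℤ),
        r j = (Y j - Y (j - 1)) / ((ℓidx j - ℓidx (j - 1) : ℤ) : ℝ))
    (hrM : r ((M : ℤ) + 1) = r (-(M : ℤ) + 1))
    (hy : ∀ j ∈ Finset.Icc (-(M : ℤ) + 1) (M : ℤ), ∀ i : ℤ, 0 ≤ i → i ≤ ℓidx j - ℓidx (j - 1) →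
        y (ℓidx (j - 1) + i) = Y (j - 1) + (i : ℝ) * r j)
    (hyper : ∀ ℓ : ℤ, y (ℓ + 2 * (N : ℤ)) = y ℓ + (Y (M : ℤ) - Y (-(M : ℤ)))) :
    ∃ η : ℤ → ℕ → ℝ,
      (∀ j ∈ Finset.Icc (-(M : ℤ) + 1) (M : ℤ), ∀ k ∈ Finset.Icc 2 s,
          η j k ∈ Set.Icc (0 : ℝ) 1) ∧
      (∑ k ∈ Finset.Icc 1 s, ∑ ℓ ∈ rng N, φ (y (ℓ + (k : ℤ) - 1) - y (ℓ - 1)))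
        = (∑ j ∈ Finset.Icc (-(M : ℤ) + 1) (M : ℤ),
            ((ℓidx j - ℓidx (j - 1) : ℤ) : ℝ) * ∑ k ∈ Finset.Icc 1 s, φ ((k : ℝ) * r j))
          + ∑ j ∈ Finset.Icc (-(M : ℤ) + 1) (M : ℤ), ∑ k ∈ Finset.Icc 2 s,
              ((-(k : ℝ) ^ 3 + (k : ℝ)) / 12)
                * iteratedDeriv 2 φ ((k : ℝ) * (η j k * r j + (1 - η j k) * r (j + 1)))
                * (r (j + 1) - r j) ^ 2 := by
  have hIcc : Icc (-(M : ℤ) + 1) (M : ℤ) = Ioc (-(M : ℤ)) (-(M : ℤ) + (2 * M : ℕ)) := by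
    ext; simp; lia
  have hMM : -(M : ℤ) + (2 * M : ℕ) = M := by push_cast; ring
  have hrng : rng N = Ioc (-(N : ℤ)) N := by ext; simp [rng]
  -- To the right of node `j` the spacing is `r (j + 1)`; at `j = M` this is periodicity.
  have hright : ∀ j ∈ Icc (-(M : ℤ) + 1) (M : ℤ), ∀ i : ℤ, 0 ≤ i → i ≤ s →
      y (ℓidx j + i) = Y j + i * r (j + 1) := by
    intro j hj i hi0 his
    rw [mem_Icc] at hj
    rcases hj.2.lt_or_eq with hlt | rfl
    · have hj' : j + 1 ∈ Icc (-(M : ℤ) + 1) (M : ℤ) := by rw [mem_Icc]; lia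
      have hv := hν _ hj'
      have e := hy _ hj' i hi0 (by lia)
      simpa using e
    · have hj' : -(M : ℤ) + 1 ∈ Icc (-(M : ℤ) + 1) (M : ℤ) := by rw [mem_Icc]; lia
      have hv := hν _ hj'
      have e := hy _ hj' i hi0 (by lia)
      rw [add_sub_cancel_right, hl0] at e
      have e' := hyper (-(N : ℤ) + i)
      rw [hlM, hrM, show (N : ℤ) + i = -(N : ℤ) + i + 2 * N by ring, e', e]
      ring
  choose η hη hrem using fun (j : ℤ) (k : ℕ) => interp_remainder φ hφ (r j) (r (j + 1)) k
  refine ⟨η, fun j _ k _ => hη j k, ?_⟩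
  have hkey : ∀ k ∈ Icc 1 s, ∑ ℓ ∈ rng N, φ (y (ℓ + (k : ℤ) - 1) - y (ℓ - 1))
      = ∑ j ∈ Icc (-(M : ℤ) + 1) (M : ℤ),
          ((ℓidx j - ℓidx (j - 1) : ℤ) : ℝ) * φ ((k : ℝ) * r j)
        + ∑ j ∈ Icc (-(M : ℤ) + 1) (M : ℤ), ((-(k : ℝ) ^ 3 + (k : ℝ)) / 12)
            * iteratedDeriv 2 φ ((k : ℝ) * (η j k * r j + (1 - η j k) * r (j + 1)))
            * (r (j + 1) - r j) ^ 2 := by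
    intro k hk
    rw [mem_Icc] at hk
    have hk0 : (k : ℝ) ≠ 0 := by exact_mod_cast (by lia : k ≠ 0)
    have hsplit := (sum_elements (fun ℓ => φ (y (ℓ + (k : ℤ) - 1) - y (ℓ - 1))) ℓidx
      (-(M : ℤ)) (2 * M) (fun j hj => (hmono j (hIcc ▸ hj)).le)).2
    rw [← hIcc, hMM, hl0, hlM] at hsplit
    have htel := sum_Ioc_shift (fun j => φ ((k : ℝ) * r j)) (-(M : ℤ)) (2 * M)
    rw [← hIcc, hMM, hrM, add_sub_cancel_right] at htel
    have hblock : ∀ j ∈ Icc (-(M : ℤ) + 1) (M : ℤ),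
        ∑ ℓ ∈ Ioc (ℓidx (j - 1)) (ℓidx j), φ (y (ℓ + (k : ℤ) - 1) - y (ℓ - 1))
          = (((ℓidx j - ℓidx (j - 1) : ℤ) : ℝ) * φ ((k : ℝ) * r j)
            + ((-(k : ℝ) ^ 3 + (k : ℝ)) / 12)
              * iteratedDeriv 2 φ ((k : ℝ) * (η j k * r j + (1 - η j k) * r (j + 1)))
              * (r (j + 1) - r j) ^ 2)
            + ((k : ℝ) - 1) / 2 * (φ ((k : ℝ) * r (j + 1)) - φ ((k : ℝ) * r j)) := by
      intro j hj
      have hv := hν j hj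
      rw [block_sum φ y _ _ k (by lia) (r j) (r (j + 1)) (Y (j - 1)) (Y j) (hy j hj)
        (fun i hi hik => hright j hj i hi (by lia)), ← hrem j k, sum_sub_distrib,
        sum_add_distrib, ← sum_mul, ← sum_mul, ← sum_div, ← sum_div, sum_sub_distrib]
      have hg : ∑ p ∈ range k, (p : ℝ) = k * (k - 1) / 2 := by
        rw [← Nat.cast_sum, eq_div_iff two_ne_zero, ← Nat.cast_pred (by lia : 0 < k)]
        exact_mod_cast sum_range_id_mul_two k
      rw [hg, sum_const, card_range, nsmul_eq_mul]
      generalize ∑ p ∈ range k, φ (((k : ℝ) - p) * r j + p * r (j + 1)) = T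
      field_simp
      ring
    rw [hrng, hsplit, sum_congr rfl hblock, sum_add_distrib, sum_add_distrib, ← mul_sum,
      sum_sub_distrib, htel]
    ring
  rw [sum_congr rfl hkey, sum_add_distrib]
  congr 1
  · rw [sum_comm]
    exact sum_congr rfl fun j _ => (mul_sum _ _ _).symm
  · rw [sum_comm]
    refine sum_congr rfl fun j _ => ?_
    -- The nearest-neighbour term `k = 1` carries the coefficient `-1³ + 1 = 0`.
    have : Icc 1 s = insert 1 (Icc 2 s) := by ext; simp; lia
    rw [this, sum_insert (by simp)]
    simp
end
end

section
/- Suppose a₂ ≤ 0 and a₃ ≤ 0. Then for every u ∈ U, Q^a(u) ≤ A^{(3)} ‖Du‖²_{ℓ²_ε} − ε² (a₂ + 6a₃) ‖D²u‖²_{ℓ²_ε}. -/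
/-!
Write `w = Du`. The parallelogram-type identities
`(x + y)² = 2x² + 2y² - (y - x)²` and
`(x + y + z)² = 3(x² + y² + z²) - (y - x)² - (z - y)² - (z - x)²`, together with
`(z - x)² ≤ 2(z - y)² + 2(y - x)²` and `a₃ ≤ 0`, bound each summand of the quadratic
form by squares of `w` and of `ε Dw` at shifted indices. Summing over a period and removing the
shifts by periodicity (`sum_rng_shift`) gives the claim.
-/

open Finset Real

noncomputable section

/-- the third-nearest-neighbor atomistic Hessian quadratic form -/
def Qa3 (N : ℕ) (a₁ a₂ a₃ : ℝ) (u : ℤ → ℝ) : ℝ :=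
  eps N * ∑ ℓ ∈ rng N,
    (a₁ * (Dv N u ℓ) ^ 2
      + a₂ * (Dv N u ℓ + Dv N u (ℓ + 1)) ^ 2
      + a₃ * (Dv N u ℓ + Dv N u (ℓ + 1) + Dv N u (ℓ + 2)) ^ 2)

/-- Over one full period, the sum of a `2N`-periodic sequence is unchanged by a unit shift. -/
lemma sum_rng_shift (N : ℕ) (hN : 0 < N) (f : ℤ → ℝ) (hf : Periodic2N N f) :
    ∑ ℓ ∈ rng N, f (ℓ + 1) = ∑ ℓ ∈ rng N, f ℓ := by
  -- The shift is a cyclic permutation of the index range, wrapping `N` around to `-N + 1`.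
  refine Finset.sum_nbij' (fun ℓ => if ℓ = N then -(N : ℤ) + 1 else ℓ + 1)
    (fun ℓ => if ℓ = -(N : ℤ) + 1 then (N : ℤ) else ℓ - 1) ?_ ?_ ?_ ?_ ?_
  · intro ℓ h
    simp only [rng, Finset.mem_Icc] at h ⊢
    split_ifs <;> omega
  · intro ℓ h
    simp only [rng, Finset.mem_Icc] at h ⊢
    split_ifs <;> omega
  · intro ℓ h
    simp only [rng, Finset.mem_Icc] at h
    split_ifs <;> omega
  · intro ℓ h
    simp only [rng, Finset.mem_Icc] at h
    split_ifs <;> omega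
  · intro ℓ _
    split_ifs with h
    · rw [← hf (-(N : ℤ) + 1), h]
      congr 1
      ring
    · rfl

lemma Periodic2N.Dv {N : ℕ} {v : ℤ → ℝ} (hv : Periodic2N N v) : Periodic2N N (Dv N v) := by
  intro ℓ
  have h := hv (ℓ - 1)
  rw [show ℓ - 1 + 2 * (N : ℤ) = ℓ + 2 * (N : ℤ) - 1 by ring] at h
  simp only [_root_.Dv, hv ℓ, h]

lemma Periodic2N.sq {N : ℕ} {v : ℤ → ℝ} (hv : Periodic2N N v) :
    Periodic2N N (fun ℓ => v ℓ ^ 2) := fun ℓ => by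
  simp only [hv ℓ]

/-- upper bound for the third-nearest-neighbor atomistic Hessian. -/
theorem atomistic_hessian_upper_bound_3rd (N : ℕ) (hN : 0 < N)
    (a₁ a₂ a₃ : ℝ) (h2 : a₂ ≤ 0) (h3 : a₃ ≤ 0)
    (u : ℤ → ℝ) (hu : memU N u) :
    Qa3 N a₁ a₂ a₃ u ≤
      (a₁ + 4 * a₂ + 9 * a₃) * nsq N (Dv N u)
        - (eps N) ^ 2 * (a₂ + 6 * a₃) * nsq N (Dv N (Dv N u)) := by
  have hε : 0 < eps N := by unfold eps; positivity
  have hw : Periodic2N N (Dv N u) := hu.1.Dv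
  have hd : ∀ ℓ, Dv N u (ℓ + 1) - Dv N u ℓ = eps N * Dv N (Dv N u) (ℓ + 1) := by
    intro ℓ
    rw [Dv.eq_1 N (Dv N u), add_sub_cancel_right]
    field_simp
  have hz : Periodic2N N (Dv N (Dv N u)) := hw.Dv
  unfold Qa3 nsq
  generalize Dv N (Dv N u) = z at *
  generalize Dv N u = w at *
  have shift_two : ∀ v, Periodic2N N v → ∑ ℓ ∈ rng N, v (ℓ + 2) ^ 2 = ∑ ℓ ∈ rng N, v ℓ ^ 2 := by
    intro v hv
    rw [← sum_rng_shift N hN _ hv.sq,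
      ← sum_rng_shift N hN (fun ℓ => v (ℓ + 1) ^ 2)
        (fun ℓ => by dsimp only; rw [add_right_comm, hv])]
    simp only [add_assoc, one_add_one_eq_two]
  have hw1 := sum_rng_shift N hN _ hw.sq
  have hw2 := shift_two w hw
  have hz1 := sum_rng_shift N hN _ hz.sq
  have hz2 := shift_two z hz
  have key : ∑ ℓ ∈ rng N, (a₁ * w ℓ ^ 2 + a₂ * (w ℓ + w (ℓ + 1)) ^ 2
        + a₃ * (w ℓ + w (ℓ + 1) + w (ℓ + 2)) ^ 2)
      ≤ ∑ ℓ ∈ rng N, ((a₁ + 2 * a₂ + 3 * a₃) * w ℓ ^ 2 + (2 * a₂ + 3 * a₃) * w (ℓ + 1) ^ 2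
        + 3 * a₃ * w (ℓ + 2) ^ 2 - eps N ^ 2 * (a₂ + 3 * a₃) * z (ℓ + 1) ^ 2
        - eps N ^ 2 * (3 * a₃) * z (ℓ + 2) ^ 2) := by
    refine Finset.sum_le_sum fun ℓ _ => ?_
    have e1 := hd ℓ
    have e2 := hd (ℓ + 1)
    rw [add_assoc, one_add_one_eq_two] at e2
    rw [show w (ℓ + 2) = w ℓ + eps N * z (ℓ + 1) + eps N * z (ℓ + 2) by linarith,
      show w (ℓ + 1) = w ℓ + eps N * z (ℓ + 1) by linarith]
    -- The two sides differ exactly by `-a₃` times the square of the second difference of `w`.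
    nlinarith [mul_nonneg (neg_nonneg.2 h3)
      (sq_nonneg (eps N * z (ℓ + 1) - eps N * z (ℓ + 2)))]
  simp only [Finset.sum_sub_distrib, Finset.sum_add_distrib, ← Finset.mul_sum,
    hw1, hw2, hz1, hz2] at key ⊢
  refine (mul_le_mul_of_nonneg_left key hε.le).trans (le_of_eq ?_)
  ring
end
end

section
/- Suppose a_k ≤ 0 for k = 2, …, s. Then there exists a real number B satisfying Σ_{k=2}^{s} (k−1) a_k ≥ B ≥ a₂ + Σ_{k=3}^{s} ((k⁴ − k²)/12) a_k such that: Q^a(u) > 0 for all u ∈ U with u ≠ 0 if and only if A − ε² μ_ε² B > 0, where μ_ε := 2 sin(πε/2)/ε. -/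
/-!
Put `x = π / (2N)`. Parseval on `ZMod (2N)` turns the form into a sum over Fourier modes `m` with
symbol `∑ a_k sin² (k m x) / sin² (m x)`. The lowest mode maximises each quotient
`sin² (k m x) / sin² (m x)` (`mode_le`); since `a_k ≤ 0` for `k ≥ 2`, and the `k = 1` quotient is
constantly `1`, it minimises the symbol. Hence the form is positive definite iff
`∑ a_k sin² (k x) / sin² x > 0` (`Qa_pos_iff`); necessity is seen by testing with
`cos (π ℓ / N)` and `sin (π ℓ / N)`.

As `ε² μ_ε² = 4 sin² x`, this condition reads `A - ε² μ_ε² B > 0` for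
`B = ∑ a_k (k² sin² x - sin² (k x)) / (4 sin⁴ x)`. The coefficient of `a_k` lies between `k - 1` and
`(k⁴ - k²) / 12` (`defect_bounds`), which gives the two bounds on `B`.
-/

open Finset Real

noncomputable section

/-- the s-th nearest-neighbor atomistic Hessian quadratic form -/
def Qa (N s : ℕ) (a : ℕ → ℝ) (u : ℤ → ℝ) : ℝ :=
  eps N * ∑ ℓ ∈ rng N, ∑ k ∈ Finset.Icc 1 s,
    a k * (∑ j ∈ Finset.range k, Dv N u (ℓ + (j : ℤ))) ^ 2

/-! ### Trigonometric inequalities -/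

/-- `y ↦ sin (m y) / sin y` is nonincreasing up to its first zero, with denominators cleared. -/
lemma sin_mul_ratio_antitone {x y : ℝ} (hx : 0 ≤ x) (hxy : x ≤ y) (hy : y ≤ π / 2) (m : ℕ)
    (hm : m * y ≤ π) : sin (m * y) * sin x ≤ sin (m * x) * sin y := by
  induction m with
  | zero => simp
  | succ m ih =>
    push_cast at hm ⊢
    have hm0 : (0 : ℝ) ≤ m := Nat.cast_nonneg m
    have hmy : m * y ≤ π := by nlinarith
    have ih := ih hmy
    have hcos : cos y ≤ cos x := cos_le_cos_of_nonneg_of_le_pi hx (by linarith [pi_pos]) hxy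
    have hcosm : cos (m * y) ≤ cos (m * x) :=
      cos_le_cos_of_nonneg_of_le_pi (by positivity) hmy (by gcongr)
    have hsx : 0 ≤ sin x := sin_nonneg_of_nonneg_of_le_pi hx (by linarith [pi_pos])
    have hsy : 0 ≤ sin y := sin_nonneg_of_nonneg_of_le_pi (by linarith) (by linarith [pi_pos])
    have hcx : 0 ≤ cos x := cos_nonneg_of_neg_pi_div_two_le_of_le (by linarith [pi_pos])
      (by linarith)
    have hsm : 0 ≤ sin (m * y) :=
      sin_nonneg_of_nonneg_of_le_pi (mul_nonneg hm0 (by linarith)) hmy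
    rw [add_mul, add_mul, one_mul, one_mul, sin_add, sin_add]
    have h1 : sin (m * y) * sin x * cos y ≤ sin (m * y) * sin x * cos x :=
      mul_le_mul_of_nonneg_left hcos (by positivity)
    have h2 : sin x * sin y * cos (m * y) ≤ sin x * sin y * cos (m * x) :=
      mul_le_mul_of_nonneg_left hcosm (by positivity)
    have h3 : cos x * (sin (m * y) * sin x) ≤ cos x * (sin (m * x) * sin y) :=
      mul_le_mul_of_nonneg_left ih hcx
    linarith

/-- Sharp mode comparison for `k, m ≤ N`. As long as `k m x ≤ π` it is the monotonicity of
`sin (m y) / sin y`; beyond that the bounds `2 t / π ≤ sin t` and `sin t ≤ t` are enough. -/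
lemma mode_le_aux {N : ℕ} (hN : 0 < N) {k m : ℕ} (hk : k ≤ N) (hm : m ≤ N) {x : ℝ}
    (hx : 2 * (N : ℝ) * x = π) :
    sin (k * m * x) ^ 2 * sin x ^ 2 ≤ sin (k * x) ^ 2 * sin (m * x) ^ 2 := by
  have hN' : (1 : ℝ) ≤ N := by exact_mod_cast hN
  have hk' : (k : ℝ) ≤ N := by exact_mod_cast hk
  have hm' : (m : ℝ) ≤ N := by exact_mod_cast hm
  have hpi := pi_pos
  have hx0 : 0 < x := by
    by_contra h
    nlinarith
  have hkx : k * x ≤ π / 2 := by nlinarith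
  have hmx : m * x ≤ π / 2 := by nlinarith
  have hx2 : x ≤ π / 2 := by nlinarith
  rcases Nat.eq_zero_or_pos k with rfl | hk1
  · simp
  have hk1' : (1 : ℝ) ≤ k := by exact_mod_cast hk1
  have hsx : 0 ≤ sin x := sin_nonneg_of_nonneg_of_le_pi hx0.le (by linarith)
  have hsk : 0 ≤ sin (k * x) := sin_nonneg_of_nonneg_of_le_pi (by positivity) (by linarith)
  have hsm : 0 ≤ sin (m * x) := sin_nonneg_of_nonneg_of_le_pi (by positivity) (by linarith)
  rcases le_total ((k : ℝ) * m * x) π with h | h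
  · have hs : 0 ≤ sin (k * m * x) := sin_nonneg_of_nonneg_of_le_pi (by positivity) h
    have h1 := sin_mul_ratio_antitone hx0.le (show x ≤ k * x by nlinarith) hkx m (by linarith)
    rw [show (m : ℝ) * (k * x) = k * m * x by ring] at h1
    rw [← mul_pow, ← mul_pow]
    gcongr 1
    linarith
  · have h1 : 2 / π * (k * x) ≤ sin (k * x) := mul_le_sin (by positivity) hkx
    have h2 : 2 / π * (m * x) ≤ sin (m * x) := mul_le_sin (by positivity) hmx
    have h3 : sin x ≤ x := sin_le hx0.le
    have h4 : x ≤ 2 / π * (k * x) * (2 / π * (m * x)) := by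
      have : 2 / π * (k * x) * (2 / π * (m * x)) = 4 * x * (k * m * x) / π ^ 2 := by
        field_simp
        ring
      rw [this, le_div_iff₀ (by positivity)]
      have := pi_le_four
      nlinarith [mul_le_mul_of_nonneg_left h hx0.le, mul_le_mul_of_nonneg_left this
        (mul_pos hx0 hpi).le]
    have h5 : 2 / π * (k * x) * (2 / π * (m * x)) ≤ sin (k * x) * sin (m * x) := by gcongr
    calc sin (k * m * x) ^ 2 * sin x ^ 2 ≤ 1 * sin x ^ 2 := by
          gcongr
          exact sin_sq_le_one _
      _ = sin x ^ 2 := one_mul _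
      _ ≤ (sin (k * x) * sin (m * x)) ^ 2 := by
          gcongr
          linarith
      _ = _ := by ring

/-- Every integer frequency folds to some `r ∈ {0, …, N}` without changing `sin²`. -/
lemma exists_fold {N : ℕ} (hN : 0 < N) {x : ℝ} (hx : 2 * (N : ℝ) * x = π) (k : ℤ) :
    ∃ r : ℕ, r ≤ N ∧ ∀ m : ℤ, sin (k * m * x) ^ 2 = sin (r * m * x) ^ 2 := by
  have key : ∃ r q : ℤ, k = r + 2 * N * q ∧ |r| ≤ N := by
    have h1 := Int.emod_nonneg k (show (2 * N : ℤ) ≠ 0 by omega)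
    have h2 := Int.emod_lt_of_pos k (show (0 : ℤ) < 2 * N by omega)
    have h3 := Int.emod_add_mul_ediv k (2 * N)
    by_cases h : k % (2 * N) ≤ N
    · exact ⟨k % (2 * N), k / (2 * N), h3.symm, by rw [abs_le]; omega⟩
    · refine ⟨k % (2 * N) - 2 * N, k / (2 * N) + 1, by linarith, by rw [abs_le]; omega⟩
  obtain ⟨r, q, hk, hr⟩ := key
  refine ⟨r.natAbs, by rw [abs_le] at hr; omega, fun m => ?_⟩
  have e : (k : ℝ) * m * x = r * m * x + ((q * m : ℤ) : ℝ) * π := by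
    rw [hk, ← hx]
    push_cast
    ring
  rw [e, sin_add_int_mul_pi, mul_pow, ← zpow_natCast, ← zpow_mul, mul_comm (q * m) _, zpow_mul]
  simp only [Nat.cast_ofNat, even_two, Even.neg_zpow, one_zpow, one_mul]
  rw [Nat.cast_natAbs]
  rcases abs_choice r with h | h
  · rw [h]
  · rw [h]
    push_cast
    rw [neg_mul, neg_mul, sin_neg, neg_sq]

/-- Among the Fourier modes, the lowest one maximises `sin² (k m x) / sin² (m x)`, `x = π / (2N)`,
for every interaction range `k`. -/
lemma mode_le {N : ℕ} (hN : 0 < N) {x : ℝ} (hx : 2 * (N : ℝ) * x = π) (k m : ℤ) :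
    sin (k * m * x) ^ 2 * sin x ^ 2 ≤ sin (k * x) ^ 2 * sin (m * x) ^ 2 := by
  obtain ⟨r, hr, hr'⟩ := exists_fold hN hx k
  obtain ⟨t, ht, ht'⟩ := exists_fold hN hx m
  have h1 := hr' m
  have h2 := ht' r
  have h3 := hr' 1
  have h4 := ht' 1
  push_cast at h1 h2 h3 h4
  simp only [mul_one] at h3 h4
  rw [h1, h3, h4, mul_comm (r : ℝ) (m : ℝ), h2, mul_comm (t : ℝ) (r : ℝ)]
  exact mode_le_aux hN hr ht hx

/-- Two-sided bound on the defect `T k = k² sin² x - sin² (k x)`. It follows from the recurrence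
`T (k + 1) - 2 T k + T (k - 1) = 4 sin² x sin² (k x)`, so the increments `T (k + 1) - T k` are
bounded along with `T`. -/
lemma defect_bounds (x : ℝ) (k : ℕ) :
    (4 * sin x ^ 4 * k ≤ ((k : ℝ) + 1) ^ 2 * sin x ^ 2 - sin ((k + 1) * x) ^ 2 ∧
      ((k : ℝ) + 1) ^ 2 * sin x ^ 2 - sin ((k + 1) * x) ^ 2 ≤
        sin x ^ 4 * (((k : ℝ) + 1) ^ 4 - ((k : ℝ) + 1) ^ 2) / 3) ∧
    (4 * sin x ^ 4 ≤ (((k : ℝ) + 2) ^ 2 * sin x ^ 2 - sin ((k + 2) * x) ^ 2) -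
        (((k : ℝ) + 1) ^ 2 * sin x ^ 2 - sin ((k + 1) * x) ^ 2) ∧
      (((k : ℝ) + 2) ^ 2 * sin x ^ 2 - sin ((k + 2) * x) ^ 2) -
        (((k : ℝ) + 1) ^ 2 * sin x ^ 2 - sin ((k + 1) * x) ^ 2) ≤
        sin x ^ 4 * (2 * ((k : ℝ) + 1) * (k + 2) * (2 * k + 3)) / 3) := by
  induction k with
  | zero =>
    have h2 : sin (2 * x) ^ 2 = 4 * sin x ^ 2 - 4 * sin x ^ 4 := by
      rw [sin_two_mul, mul_pow, mul_pow, cos_sq']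
      ring
    norm_num [h2]
    linarith
  | succ k ih =>
    obtain ⟨⟨h1, h2⟩, h3, h4⟩ := ih
    have hs : 0 ≤ sin x ^ 4 := by positivity
    have hk : (0 : ℝ) ≤ k := Nat.cast_nonneg k
    have hrec : sin ((k + 3) * x) ^ 2 - 2 * sin ((k + 2) * x) ^ 2 + sin ((k + 1) * x) ^ 2 =
        2 * sin x ^ 2 * (1 - 2 * sin ((k + 2) * x) ^ 2) := by
      rw [show ((k : ℝ) + 3) * x = (k + 2) * x + x by ring,
        show ((k : ℝ) + 1) * x = (k + 2) * x - x by ring, sin_add, sin_sub]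
      have e1 := cos_sq' ((k + 2) * x)
      have e2 := cos_sq' x
      ring_nf
      ring_nf at e1 e2
      simp only [e1, e2]
      ring
    have hS : 0 ≤ sin x ^ 2 * sin ((k + 2) * x) ^ 2 := by positivity
    have hS' : sin x ^ 2 * sin ((k + 2) * x) ^ 2 ≤ ((k : ℝ) + 2) ^ 2 * sin x ^ 4 := by
      have : sin ((k + 2) * x) ^ 2 ≤ ((k : ℝ) + 2) ^ 2 * sin x ^ 2 := by
        have : 0 ≤ 4 * sin x ^ 4 * k := by positivity
        linarith
      calc _ ≤ sin x ^ 2 * (((k : ℝ) + 2) ^ 2 * sin x ^ 2) := by gcongr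
        _ = _ := by ring
    push_cast
    rw [show (k : ℝ) + 1 + 1 = k + 2 by ring, show (k : ℝ) + 1 + 2 = k + 3 by ring]
    refine ⟨⟨by linarith, by linarith⟩, ?_, ?_⟩
    · linarith
    · linarith

/-! ### Parseval on `ZMod n` and the shift estimate -/

open scoped ZMod ComplexConjugate in
/-- Parseval's identity for the discrete Fourier transform. -/
lemma parseval {n : ℕ} [NeZero n] (f : ZMod n → ℂ) :
    ∑ m, ‖ZMod.dft f m‖ ^ 2 = n * ∑ z, ‖f z‖ ^ 2 := by
  have h : ∑ m, ZMod.dft f m * conj (ZMod.dft f m) = n * ∑ z, f z * conj (f z) := by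
    calc ∑ m, ZMod.dft f m * conj (ZMod.dft f m)
        = ∑ m, ∑ z, ZMod.stdAddChar (-(z * m)) * f z * conj (ZMod.dft f m) := by
          refine Finset.sum_congr rfl fun m _ => ?_
          conv_lhs => arg 1; rw [ZMod.dft_apply]
          simp only [Finset.sum_mul, smul_eq_mul]
      _ = ∑ z, f z * conj (ZMod.dft (ZMod.dft f) (-z)) := by
          rw [Finset.sum_comm]
          refine Finset.sum_congr rfl fun z _ => ?_
          rw [ZMod.dft_apply (ZMod.dft f), map_sum, Finset.mul_sum]
          refine Finset.sum_congr rfl fun m _ => ?_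
          rw [smul_eq_mul, map_mul, ← AddChar.map_neg_eq_conj]
          ring_nf
      _ = _ := by
          simp only [ZMod.dft_dft, neg_neg, smul_eq_mul, map_mul, Complex.conj_natCast,
            Finset.mul_sum]
          refine Finset.sum_congr rfl fun z _ => ?_
          ring
  simp only [Complex.mul_conj, Complex.normSq_eq_norm_sq] at h
  exact_mod_cast h

lemma dft_shift_sub {n : ℕ} [NeZero n] (f : ZMod n → ℂ) (k m : ZMod n) :
    ZMod.dft (fun z => f (z + k) - f z) m = (ZMod.stdAddChar (k * m) - 1) * ZMod.dft f m := by
  have h : ∑ z, ZMod.stdAddChar (-(z * m)) * f (z + k) =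
      ZMod.stdAddChar (k * m) * ∑ z, ZMod.stdAddChar (-(z * m)) * f z := by
    rw [← Equiv.sum_comp (Equiv.addRight k) (fun z => ZMod.stdAddChar (-(z * m)) * f z),
      Finset.mul_sum]
    refine Finset.sum_congr rfl fun z _ => ?_
    rw [← mul_assoc, ← AddChar.map_add_eq_mul]
    simp only [Equiv.coe_addRight]
    ring_nf
  simp only [ZMod.dft_apply, smul_eq_mul, mul_sub, Finset.sum_sub_distrib, h]
  ring

lemma norm_stdAddChar_sub_one {N : ℕ} [NeZero (2 * N)] {x : ℝ} (hx : 2 * (N : ℝ) * x = π)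
    (j : ℤ) :
    ‖(ZMod.stdAddChar (j : ZMod (2 * N)) : ℂ) - 1‖ ^ 2 = 4 * sin (j * x) ^ 2 := by
  have hN : (N : ℝ) ≠ 0 := by
    have := NeZero.ne (2 * N)
    have : N ≠ 0 := by omega
    exact_mod_cast this
  have e : (2 * π * Complex.I * j / ((2 * N : ℕ) : ℂ) : ℂ) = ((2 * (j * x) : ℝ) : ℂ) * Complex.I := by
    have hN' : (N : ℂ) ≠ 0 := by exact_mod_cast hN
    rw [← hx]
    push_cast
    field_simp
  rw [ZMod.stdAddChar_coe, e, ← Complex.normSq_eq_norm_sq, Complex.normSq_apply]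
  simp only [Complex.sub_re, Complex.sub_im, Complex.exp_ofReal_mul_I_re,
    Complex.exp_ofReal_mul_I_im, Complex.one_re, Complex.one_im]
  rw [cos_two_mul, sin_two_mul]
  have := cos_sq' (j * x)
  linear_combination (4 * cos (j * x) ^ 2 - 4) * this

/-- Difference energy at range `k` of a function on the discrete circle. -/
def energy {n : ℕ} [NeZero n] (f : ZMod n → ℝ) (k : ℕ) : ℝ := ∑ z, (f (z + k) - f z) ^ 2

lemma energy_fourier {N : ℕ} [NeZero (2 * N)] {x : ℝ} (hx : 2 * (N : ℝ) * x = π)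
    (f : ZMod (2 * N) → ℝ) (k : ℕ) :
    ((2 * N : ℕ) : ℝ) * energy f k =
      ∑ m : ZMod (2 * N), 4 * sin ((k : ℤ) * (m.val : ℤ) * x) ^ 2 *
        ‖ZMod.dft (fun z => (f z : ℂ)) m‖ ^ 2 := by
  have h := parseval (fun z : ZMod (2 * N) => ((f (z + k) : ℂ) - f z))
  have e : ∑ z : ZMod (2 * N), ‖((f (z + k) : ℂ) - f z)‖ ^ 2 = energy f k := by
    refine Finset.sum_congr rfl fun z _ => ?_
    rw [← Complex.ofReal_sub, Complex.norm_real, Real.norm_eq_abs, sq_abs]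
  rw [e] at h
  rw [← h]
  refine Finset.sum_congr rfl fun m _ => ?_
  rw [dft_shift_sub (fun z => (f z : ℂ)), norm_mul, mul_pow]
  have := norm_stdAddChar_sub_one hx ((k : ℤ) * (m.val : ℤ))
  push_cast at this
  rw [ZMod.natCast_zmod_val] at this
  rw [this]
  push_cast
  rfl

/-- The range-`k` energy is controlled by the nearest-neighbour energy, with the constant
attained by the lowest Fourier mode. -/
lemma energy_le {N : ℕ} [NeZero (2 * N)] (hN : 0 < N) {x : ℝ} (hx : 2 * (N : ℝ) * x = π)
    (f : ZMod (2 * N) → ℝ) (k : ℕ) :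
    energy f k * sin x ^ 2 ≤ sin (k * x) ^ 2 * energy f 1 := by
  have hpos : (0 : ℝ) < ((2 * N : ℕ) : ℝ) := by exact_mod_cast (by omega : 0 < 2 * N)
  refine le_of_mul_le_mul_left ?_ hpos
  have h1 := energy_fourier hx f k
  have h2 := energy_fourier hx f 1
  calc _ = (((2 * N : ℕ) : ℝ) * energy f k) * sin x ^ 2 := by ring
    _ ≤ sin (k * x) ^ 2 * (((2 * N : ℕ) : ℝ) * energy f 1) := by
      rw [h1, h2, Finset.sum_mul, Finset.mul_sum]
      refine Finset.sum_le_sum fun m _ => ?_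
      have := mode_le hN hx k m.val
      push_cast at this ⊢
      rw [one_mul]
      have h := mul_le_mul_of_nonneg_left this
        (show 0 ≤ 4 * ‖ZMod.dft (fun z => (f z : ℂ)) m‖ ^ 2 by positivity)
      linarith
    _ = _ := by ring

/-! ### Periodic sequences as functions on `ZMod (2N)` -/

lemma sum_rng {N : ℕ} [NeZero (2 * N)] (g : ZMod (2 * N) → ℝ) :
    ∑ ℓ ∈ rng N, g (ℓ : ZMod (2 * N)) = ∑ z, g z := by
  have hinj : Set.InjOn (fun ℓ : ℤ => (ℓ : ZMod (2 * N))) (rng N) := by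
    intro p hp q hq hpq
    simp only [rng, coe_Icc, Set.mem_Icc] at hp hq
    have := (ZMod.intCast_eq_intCast_iff_dvd_sub p q (2 * N)).1 hpq
    have := Int.eq_zero_of_abs_lt_dvd this (by rw [abs_lt]; push_cast; omega)
    omega
  rw [← Finset.sum_image (f := g) hinj]
  congr 1
  apply Finset.eq_univ_of_card
  rw [Finset.card_image_of_injOn hinj, ZMod.card, rng, Int.card_Icc]
  omega

/-- The function on `ZMod (2N)` induced by a sequence, read off on `0, …, 2N - 1`. -/
def onCircle (N : ℕ) (u : ℤ → ℝ) : ZMod (2 * N) → ℝ := fun z => u (z.val : ℤ)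

lemma onCircle_coe {N : ℕ} [NeZero (2 * N)] {u : ℤ → ℝ} (hu : Periodic2N N u) (ℓ : ℤ) :
    onCircle N u (ℓ : ZMod (2 * N)) = u ℓ := by
  have hp : Function.Periodic u (2 * N : ℤ) := hu
  rw [onCircle, ZMod.val_intCast]
  push_cast
  have h := hp.int_mul (ℓ / (2 * N)) (ℓ % (2 * N))
  rw [← h]
  congr 1
  push_cast
  linarith [Int.emod_add_mul_ediv ℓ (2 * N)]

lemma Qa_eq {N : ℕ} [NeZero (2 * N)] (hN : 0 < N) (s : ℕ) (a : ℕ → ℝ) {u : ℤ → ℝ}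
    (hu : Periodic2N N u) :
    Qa N s a u = N * ∑ k ∈ Finset.Icc 1 s, a k * energy (onCircle N u) k := by
  have hN' : (N : ℝ) ≠ 0 := by positivity
  have tel (ℓ : ℤ) (k : ℕ) : ∑ j ∈ Finset.range k, Dv N u (ℓ + (j : ℤ)) =
      N * (u (ℓ - 1 + k) - u (ℓ - 1)) := by
    induction k with
    | zero => simp
    | succ k ih =>
      rw [Finset.sum_range_succ, ih, Dv, eps]
      push_cast
      rw [show ℓ + (k : ℤ) - 1 = ℓ - 1 + k by ring, show ℓ - 1 + ((k : ℤ) + 1) = ℓ + k by ring]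
      field_simp
      ring
  have en (k : ℕ) : ∑ ℓ ∈ rng N, (u (ℓ - 1 + k) - u (ℓ - 1)) ^ 2 = energy (onCircle N u) k := by
    rw [energy, ← Equiv.sum_comp (Equiv.subRight (1 : ZMod (2 * N))), ← sum_rng]
    refine Finset.sum_congr rfl fun ℓ _ => ?_
    rw [← onCircle_coe hu, ← onCircle_coe hu (ℓ - 1)]
    push_cast
    rfl
  rw [Qa, Finset.sum_comm, Finset.mul_sum, Finset.mul_sum]
  refine Finset.sum_congr rfl fun k _ => ?_
  simp only [tel, mul_pow]
  rw [← Finset.mul_sum, ← Finset.mul_sum, en, eps]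
  field_simp

lemma memU_of_antiperiodic {N : ℕ} [NeZero (2 * N)] {u : ℤ → ℝ}
    (hu : ∀ ℓ : ℤ, u (ℓ + N) = -u ℓ) : memU N u := by
  have hp : Periodic2N N u := by
    intro ℓ
    rw [show ℓ + 2 * (N : ℤ) = ℓ + N + N by ring, hu, hu, neg_neg]
  refine ⟨hp, ?_⟩
  have h0 : ∑ ℓ ∈ rng N, u ℓ = ∑ z, onCircle N u z := by
    rw [← sum_rng]
    exact Finset.sum_congr rfl fun ℓ _ => (onCircle_coe hp ℓ).symm
  have h1 : ∑ ℓ ∈ rng N, u (ℓ + N) = ∑ z, onCircle N u z := by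
    rw [← Equiv.sum_comp (Equiv.addRight (N : ZMod (2 * N))), ← sum_rng]
    refine Finset.sum_congr rfl fun ℓ _ => ?_
    rw [← onCircle_coe hp]
    push_cast
    rfl
  simp only [hu, Finset.sum_neg_distrib] at h1
  linarith

lemma energy_one_pos {N : ℕ} [NeZero (2 * N)] (hN : 0 < N) {u : ℤ → ℝ} (hu : memU N u)
    (h0 : u ≠ 0) : 0 < energy (onCircle N u) 1 := by
  have hnn : 0 ≤ energy (onCircle N u) 1 := Finset.sum_nonneg fun z _ => sq_nonneg _
  refine lt_of_le_of_ne hnn fun h => h0 ?_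
  rw [energy, eq_comm, Finset.sum_eq_zero_iff_of_nonneg fun z _ => sq_nonneg _] at h
  have step (ℓ : ℤ) : u (ℓ + 1) = u ℓ := by
    have := h (ℓ : ZMod (2 * N)) (Finset.mem_univ _)
    rw [← onCircle_coe hu.1, ← onCircle_coe hu.1 ℓ]
    push_cast at this ⊢
    exact sub_eq_zero.1 (pow_eq_zero_iff two_ne_zero |>.1 this)
  have const (ℓ : ℤ) : u ℓ = u 0 := by
    induction ℓ with
    | zero => rfl
    | succ i ih => rw [step, ih]
    | pred i ih => rw [← step, sub_add_cancel, ih]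
  have hs := hu.2
  simp only [const, Finset.sum_const, rng, Int.card_Icc, nsmul_eq_mul] at hs
  have h00 : u 0 = 0 := by
    refine (mul_eq_zero.1 hs).resolve_left ?_
    have : ((N : ℤ) + 1 - (-(N : ℤ) + 1)).toNat ≠ 0 := by omega
    exact_mod_cast this
  funext ℓ
  rw [const, h00]
  rfl

/-- The real and imaginary parts of the lowest Fourier mode. Their energies add up exactly, since
`|exp (i (α + β)) - exp (i α)|² = 4 sin² (β / 2)`. -/
lemma energy_cos_add_sin {N : ℕ} [NeZero (2 * N)] {x : ℝ} (k : ℕ)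
    (hc : Periodic2N N fun ℓ => cos (2 * ℓ * x)) (hs : Periodic2N N fun ℓ => sin (2 * ℓ * x)) :
    energy (onCircle N fun ℓ => cos (2 * ℓ * x)) k + energy (onCircle N fun ℓ => sin (2 * ℓ * x)) k
      = 8 * N * sin (k * x) ^ 2 := by
  rw [energy, energy, ← Finset.sum_add_distrib]
  have h (z : ZMod (2 * N)) :
      (onCircle N (fun ℓ => cos (2 * ℓ * x)) (z + k) - onCircle N (fun ℓ => cos (2 * ℓ * x)) z) ^ 2
      + (onCircle N (fun ℓ => sin (2 * ℓ * x)) (z + k) - onCircle N (fun ℓ => sin (2 * ℓ * x)) z) ^ 2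
      = 4 * sin (k * x) ^ 2 := by
    obtain ⟨ℓ, rfl⟩ := ZMod.intCast_surjective z
    rw [show (ℓ : ZMod (2 * N)) + k = ((ℓ + k : ℤ) : ZMod (2 * N)) by push_cast; rfl]
    simp only [onCircle_coe hc, onCircle_coe hs]
    push_cast
    rw [show 2 * ((ℓ : ℝ) + k) * x = 2 * ℓ * x + 2 * (k * x) by ring, cos_add, sin_add,
      cos_two_mul, sin_two_mul]
    have e1 := sin_sq_add_cos_sq (2 * ℓ * x)
    have e2 := sin_sq_add_cos_sq (k * x)
    generalize cos (2 * ℓ * x) = c at *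
    generalize sin (2 * ℓ * x) = d at *
    generalize cos (k * x) = p at *
    generalize sin (k * x) = q at *
    have ep : p ^ 2 = 1 - q ^ 2 := by linarith
    have : (c * (2 * p ^ 2 - 1) - d * (2 * q * p) - c) ^ 2 +
        (d * (2 * p ^ 2 - 1) + c * (2 * q * p) - d) ^ 2 =
        (d ^ 2 + c ^ 2) * ((2 * p ^ 2 - 2) ^ 2 + 4 * q ^ 2 * p ^ 2) := by ring
    rw [this, e1, ep]
    ring
  rw [Finset.sum_congr rfl fun z _ => h z]
  simp only [Finset.sum_const, Finset.card_univ, ZMod.card, nsmul_eq_mul]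
  push_cast
  ring

/-- Positivity of `Qa` on the whole space is decided by the symbol at the lowest frequency. -/
lemma Qa_pos_iff {N : ℕ} (hN : 0 < N) (s : ℕ) (a : ℕ → ℝ)
    (ha : ∀ k ∈ Finset.Icc 2 s, a k ≤ 0) {x : ℝ} (hx : 2 * (N : ℝ) * x = π) (hsx : 0 < sin x) :
    (∀ u : ℤ → ℝ, memU N u → u ≠ 0 → 0 < Qa N s a u) ↔
      0 < ∑ k ∈ Finset.Icc 1 s, a k * sin (k * x) ^ 2 := by
  have : NeZero (2 * N) := ⟨by omega⟩
  have hN' : (0 : ℝ) < N := by exact_mod_cast hN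
  constructor
  · intro H
    have hc : memU N fun ℓ => cos (2 * ℓ * x) := memU_of_antiperiodic fun ℓ => by
      push_cast
      rw [show 2 * ((ℓ : ℝ) + N) * x = 2 * ℓ * x + 2 * N * x by ring, hx, cos_add_pi]
    have hd : memU N fun ℓ => sin (2 * ℓ * x) := memU_of_antiperiodic fun ℓ => by
      push_cast
      rw [show 2 * ((ℓ : ℝ) + N) * x = 2 * ℓ * x + 2 * N * x by ring, hx, sin_add_pi]
    have h1 := H _ hc fun h => by simpa using congrFun h 0
    have h2 : 0 ≤ Qa N s a fun ℓ => sin (2 * ℓ * x) := by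
      -- The sine mode vanishes identically when `N = 1`.
      by_cases h : (fun ℓ : ℤ => sin (2 * ℓ * x)) = 0
      · rw [h]
        simp [Qa, Dv]
      · exact (H _ hd h).le
    have h3 := add_pos_of_pos_of_nonneg h1 h2
    rw [Qa_eq hN s a hc.1, Qa_eq hN s a hd.1, ← mul_add, ← Finset.sum_add_distrib] at h3
    simp only [← mul_add, energy_cos_add_sin _ hc.1 hd.1] at h3
    have e : (N : ℝ) * ∑ k ∈ Finset.Icc 1 s, a k * (8 * N * sin (k * x) ^ 2) =
        8 * N ^ 2 * ∑ k ∈ Finset.Icc 1 s, a k * sin (k * x) ^ 2 := by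
      rw [Finset.mul_sum, Finset.mul_sum]
      exact Finset.sum_congr rfl fun k _ => by ring
    rw [e] at h3
    exact pos_of_mul_pos_right h3 (by positivity)
  · intro H u hu h0
    have hE := energy_one_pos hN hu h0
    rw [Qa_eq hN s a hu.1]
    refine mul_pos hN' (pos_of_mul_pos_right (b := _) (a := sin x ^ 2) ?_ (by positivity))
    refine lt_of_lt_of_le (mul_pos H hE) ?_
    rw [Finset.sum_mul, Finset.mul_sum]
    refine Finset.sum_le_sum fun k hk => ?_
    rw [Finset.mem_Icc] at hk
    rcases hk.1.eq_or_lt with rfl | h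
    · simp only [Nat.cast_one, one_mul]
      exact le_of_eq (by ring)
    · have := mul_le_mul_of_nonpos_left (energy_le hN hx (onCircle N u) k)
        (ha k (Finset.mem_Icc.2 ⟨h, hk.2⟩))
      linarith

/-- sharp stability of the s-th nearest-neighbor atomistic model. -/
theorem atomistic_sharp_stability (N : ℕ) (hN : 0 < N) (s : ℕ) (hs : 2 ≤ s)
    (a : ℕ → ℝ) (ha : ∀ k ∈ Finset.Icc 2 s, a k ≤ 0) :
    ∃ B : ℝ,
      (∑ k ∈ Finset.Icc 2 s, ((k : ℝ) - 1) * a k) ≥ B ∧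
      B ≥ a 2 + ∑ k ∈ Finset.Icc 3 s, (((k : ℝ) ^ 4 - (k : ℝ) ^ 2) / 12) * a k ∧
      ((∀ u : ℤ → ℝ, memU N u → u ≠ 0 → 0 < Qa N s a u) ↔
        0 < (∑ k ∈ Finset.Icc 1 s, (k : ℝ) ^ 2 * a k)
          - (eps N) ^ 2 * (2 * Real.sin (Real.pi * eps N / 2) / eps N) ^ 2 * B) := by
  set x := Real.pi * eps N / 2 with hxdef
  have hN' : (1 : ℝ) ≤ N := by exact_mod_cast hN
  have hx : 2 * (N : ℝ) * x = π := by
    rw [hxdef, eps]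
    field_simp
  have hx0 : 0 < x := by
    rw [hxdef, eps]
    positivity
  have hsx : 0 < sin x := sin_pos_of_pos_of_lt_pi hx0 (by nlinarith)
  have he : eps N ≠ 0 := by
    rw [eps]
    positivity
  have bounds (k : ℕ) (hk : 1 ≤ k) :
      ((k : ℝ) - 1) ≤ ((k : ℝ) ^ 2 * sin x ^ 2 - sin (k * x) ^ 2) / (4 * sin x ^ 4) ∧
      ((k : ℝ) ^ 2 * sin x ^ 2 - sin (k * x) ^ 2) / (4 * sin x ^ 4) ≤
        ((k : ℝ) ^ 4 - (k : ℝ) ^ 2) / 12 := by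
    obtain ⟨j, rfl⟩ := Nat.exists_eq_add_of_le' hk
    obtain ⟨⟨h1, h2⟩, -⟩ := defect_bounds x j
    push_cast
    rw [le_div_iff₀ (by positivity), div_le_iff₀ (by positivity)]
    constructor <;> linarith
  -- `B` is chosen so that `A - 4 sin² x B` is the symbol at the lowest frequency.
  refine ⟨∑ k ∈ Finset.Icc 2 s,
    ((k : ℝ) ^ 2 * sin x ^ 2 - sin (k * x) ^ 2) / (4 * sin x ^ 4) * a k, ?_, ?_, ?_⟩
  · refine Finset.sum_le_sum fun k hk => ?_
    exact mul_le_mul_of_nonpos_right (bounds k (by linarith [(Finset.mem_Icc.1 hk).1])).1 (ha k hk)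
  · have e : a 2 + ∑ k ∈ Finset.Icc 3 s, (((k : ℝ) ^ 4 - (k : ℝ) ^ 2) / 12) * a k =
        ∑ k ∈ Finset.Icc 2 s, (((k : ℝ) ^ 4 - (k : ℝ) ^ 2) / 12) * a k := by
      rw [← Finset.add_sum_Ioc_eq_sum_Icc hs, ← Finset.Icc_succ_left_eq_Ioc]
      norm_num
    rw [e]
    refine Finset.sum_le_sum fun k hk => ?_
    exact mul_le_mul_of_nonpos_right (bounds k (by linarith [(Finset.mem_Icc.1 hk).1])).2 (ha k hk)
  · rw [Qa_pos_iff hN s a ha hx hsx]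
    have hB : ∑ k ∈ Finset.Icc 2 s,
        ((k : ℝ) ^ 2 * sin x ^ 2 - sin (k * x) ^ 2) / (4 * sin x ^ 4) * a k =
        ∑ k ∈ Finset.Icc 1 s,
        ((k : ℝ) ^ 2 * sin x ^ 2 - sin (k * x) ^ 2) / (4 * sin x ^ 4) * a k := by
      rw [← Finset.add_sum_Ioc_eq_sum_Icc (show 1 ≤ s by omega), ← Finset.Icc_succ_left_eq_Ioc]
      norm_num
    have e : (∑ k ∈ Finset.Icc 1 s, (k : ℝ) ^ 2 * a k)
          - (eps N) ^ 2 * (2 * Real.sin x / eps N) ^ 2 * ∑ k ∈ Finset.Icc 2 s,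
        ((k : ℝ) ^ 2 * sin x ^ 2 - sin (k * x) ^ 2) / (4 * sin x ^ 4) * a k =
        (∑ k ∈ Finset.Icc 1 s, a k * sin (k * x) ^ 2) / sin x ^ 2 := by
      rw [hB, Finset.mul_sum, ← Finset.sum_sub_distrib, Finset.sum_div]
      refine Finset.sum_congr rfl fun k _ => ?_
      field_simp
      ring
    rw [e, div_pos_iff_of_pos_right (by positivity)]
end
end
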